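/- (Total energy divergence identity) Let d ≥ 1 and suppose P ∈ C¹((0,∞)) and U, Θ ∈ C²((0,∞)) solve the backward self-similar ODE system. Then for all r > 0: P(C_VΘ + U²/2) + P(r/2 + U)(C_VΘ + U²/2)' + (R P Θ U)' + ((d−1)/r)R P Θ U − κ(Θ'' + ((d−1)/r)Θ') − (2μ+λ)[ (U²/2)'' + ((d−1)/r)(U²/2)' ] = λ[ ( (d−1)U²/r )' + ((d−1)²/r²)U² ], where primes denote derivatives in r. -/

import Mathlib

open Real Set Filter MeasureTheory

/-- The backward self-similar ODE system for the compressible Navier-Stokes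
equations, for scalar profiles `P, U, Θ : ℝ → ℝ` considered on `(0, ∞)`. -/
def BackwardODE (d : ℕ) (R CV κ μ lam : ℝ) (P U Θ : ℝ → ℝ) : Prop :=
  ∀ r : ℝ, 0 < r →
    ((1/2) * r * deriv P r + deriv P r * U r
        + P r * (deriv U r + ((d : ℝ) - 1) / r * U r) = 0)
    ∧ ((1/2) * (P r * U r)
        + (1/2) * r * deriv (fun s => P s * U s) r
        + deriv (fun s => P s * U s ^ 2) r
        + ((d : ℝ) - 1) / r * (P r * U r ^ 2)
        + R * deriv (fun s => P s * Θ s) r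
        = (2 * μ + lam) *
            (deriv (deriv U) r + ((d : ℝ) - 1) / r * deriv U r
              - ((d : ℝ) - 1) / r ^ 2 * U r))
    ∧ (P r * (U r ^ 2 / 2 + CV * Θ r)
        + (1/2) * r * deriv (fun s => P s * (U s ^ 2 / 2 + CV * Θ s)) r
        + deriv (fun s => U s * P s * (U s ^ 2 / 2 + CV * Θ s)
            + R * U s * P s * Θ s) r
        + ((d : ℝ) - 1) / r *
            (U r * P r * (U r ^ 2 / 2 + CV * Θ r) + R * U r * P r * Θ r)
        - κ * (deriv (deriv Θ) r + ((d : ℝ) - 1) / r * deriv Θ r)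
        = 2 * μ * ((deriv U r) ^ 2 + ((d : ℝ) - 1) / r ^ 2 * U r ^ 2)
          + lam * (deriv U r + ((d : ℝ) - 1) / r * U r) ^ 2
          + (2 * μ + lam) *
              (deriv (deriv U) r + ((d : ℝ) - 1) / r * deriv U r
                - ((d : ℝ) - 1) / r ^ 2 * U r) * U r)

/-!
Multiplying the mass equation by the energy density `E = CV Θ + U² / 2` and subtracting it from the
energy equation turns the transport terms into the convective form `P (r / 2 + U) E'`. On the right
the viscous power is itself a radial divergence: writing `div` for `V ↦ V' + ((d - 1) / r) V`, the
operator `U'' + ((d - 1) / r) U' - ((d - 1) / r ^ 2) U` is `(div U)'`, and the two viscosities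
contribute `2 μ div (U U') + lam div (U div U)`. Since `U div U = (U ^ 2 / 2)' + (d - 1) U ^ 2 / r`,
only the divergence of `(d - 1) U ^ 2 / r` remains besides `(2 μ + lam) div ((U ^ 2 / 2)')`.
-/

open scoped Topology

/-- The divergence at radius `r` of the radial vector field `x ↦ V(|x|) x / |x|` in dimension `n`,
which is allowed to be any real number. Applied to `deriv f` it is the Laplacian of the radial
function `x ↦ f(|x|)`. This holds for `r > 0`; at `r = 0` Lean sets `(n - 1) / 0 = 0`. -/
noncomputable def radialDiv (n : ℝ) (V : ℝ → ℝ) (r : ℝ) : ℝ :=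
  deriv V r + (n - 1) / r * V r

section RadialDivergence

variable {n r : ℝ} {f P U V E : ℝ → ℝ}

lemma radialDiv_congr (h : U =ᶠ[𝓝 r] V) : radialDiv n U r = radialDiv n V r := by
  rw [radialDiv, radialDiv, h.deriv_eq, h.eq_of_nhds]

lemma radialDiv_add (hU : DifferentiableAt ℝ U r) (hV : DifferentiableAt ℝ V r) :
    radialDiv n (fun s => U s + V s) r = radialDiv n U r + radialDiv n V r := by
  simp only [radialDiv, deriv_fun_add hU hV]
  ring

lemma radialDiv_mul (hf : DifferentiableAt ℝ f r) (hV : DifferentiableAt ℝ V r) :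
    radialDiv n (fun s => f s * V s) r = deriv f r * V r + f r * radialDiv n V r := by
  simp only [radialDiv, deriv_fun_mul hf hV]
  ring

lemma hasDerivAt_radialDiv (hr : r ≠ 0) (hU : DifferentiableAt ℝ U r)
    (hU' : DifferentiableAt ℝ (deriv U) r) :
    HasDerivAt (radialDiv n U)
      (deriv (deriv U) r + (n - 1) / r * deriv U r - (n - 1) / r ^ 2 * U r) r := by
  have hcoeff : HasDerivAt (fun s => (n - 1) / s) (-((n - 1) / r ^ 2)) r :=
    ((hasDerivAt_const r (n - 1)).fun_div (hasDerivAt_id' r) hr).congr_deriv (by ring)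
  exact (hU'.hasDerivAt.fun_add (hcoeff.fun_mul hU.hasDerivAt)).congr_deriv (by ring)

lemma deriv_sq_div_two (hU : DifferentiableAt ℝ U r) :
    deriv (fun s => U s ^ 2 / 2) r = U r * deriv U r := by
  simp only [sq, deriv_div_const, deriv_fun_mul hU hU]
  ring

lemma radialDiv_deriv_sq_div_two (hU : ∀ᶠ s in 𝓝 r, DifferentiableAt ℝ U s)
    (hU' : DifferentiableAt ℝ (deriv U) r) :
    radialDiv n (deriv fun s => U s ^ 2 / 2) r
      = deriv U r ^ 2 + U r * radialDiv n (deriv U) r := by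
  have hgrad : (deriv fun s => U s ^ 2 / 2) =ᶠ[𝓝 r] fun s => U s * deriv U s :=
    hU.mono fun s => deriv_sq_div_two
  rw [radialDiv_congr hgrad, radialDiv_mul hU.self_of_nhds hU', sq]

lemma radialDiv_radialDiv_mul_self (hr : r ≠ 0) (hU : DifferentiableAt ℝ U r)
    (hU' : DifferentiableAt ℝ (deriv U) r) :
    radialDiv n (fun s => radialDiv n U s * U s) r
      = (deriv (deriv U) r + (n - 1) / r * deriv U r - (n - 1) / r ^ 2 * U r) * U r
        + radialDiv n U r ^ 2 := by
  have hdiv := hasDerivAt_radialDiv (n := n) hr hU hU'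
  rw [radialDiv_mul hdiv.differentiableAt hU, hdiv.deriv, sq (radialDiv n U r)]

lemma radialDiv_radialDiv_mul_self_eq_add (hr : r ≠ 0)
    (hU : ∀ᶠ s in 𝓝 r, DifferentiableAt ℝ U s) (hU' : DifferentiableAt ℝ (deriv U) r) :
    radialDiv n (fun s => radialDiv n U s * U s) r
      = radialDiv n (deriv fun s => U s ^ 2 / 2) r
        + radialDiv n (fun s => (n - 1) * U s ^ 2 / s) r := by
  have hU₀ := hU.self_of_nhds
  have hgrad : (fun s => U s * deriv U s) =ᶠ[𝓝 r] deriv fun s => U s ^ 2 / 2 :=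
    hU.mono fun s hs => (deriv_sq_div_two hs).symm
  have hsplit : (fun s => radialDiv n U s * U s)
      = fun s => U s * deriv U s + (n - 1) * U s ^ 2 / s := by
    funext s
    rw [radialDiv]
    ring
  rw [hsplit, radialDiv_add (hU₀.fun_mul hU') (by fun_prop (disch := exact hr)),
    radialDiv_congr hgrad]

lemma viscous_power_eq_radialDiv (μ lam : ℝ) (hr : r ≠ 0)
    (hU : ∀ᶠ s in 𝓝 r, DifferentiableAt ℝ U s) (hU' : DifferentiableAt ℝ (deriv U) r) :
    2 * μ * (deriv U r ^ 2 + (n - 1) / r ^ 2 * U r ^ 2) + lam * radialDiv n U r ^ 2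
        + (2 * μ + lam)
          * (deriv (deriv U) r + (n - 1) / r * deriv U r - (n - 1) / r ^ 2 * U r) * U r
      = (2 * μ + lam) * radialDiv n (deriv fun s => U s ^ 2 / 2) r
        + lam * radialDiv n (fun s => (n - 1) * U s ^ 2 / s) r := by
  have hshear := radialDiv_deriv_sq_div_two (n := n) hU hU'
  have hbulk := radialDiv_radialDiv_mul_self (n := n) hr hU.self_of_nhds hU'
  have hsplit := radialDiv_radialDiv_mul_self_eq_add (n := n) hr hU hU'
  have hlaplacian : radialDiv n (deriv U) r = deriv (deriv U) r + (n - 1) / r * deriv U r := rfl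
  linear_combination lam * (hsplit - hbulk) - 2 * μ * (hshear + U r * hlaplacian)

lemma conservative_transport_eq_convective (hP : DifferentiableAt ℝ P r)
    (hU : DifferentiableAt ℝ U r) (hE : DifferentiableAt ℝ E r)
    (hmass : 1 / 2 * r * deriv P r + deriv P r * U r
      + P r * (deriv U r + (n - 1) / r * U r) = 0) :
    1 / 2 * r * deriv (fun s => P s * E s) r + radialDiv n (fun s => U s * P s * E s) r
      = P r * (r / 2 + U r) * deriv E r := by
  rw [radialDiv, deriv_fun_mul hP hE, deriv_fun_mul (hU.fun_mul hP) hE, deriv_fun_mul hU hP]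
  linear_combination E r * hmass

end RadialDivergence

theorem total_energy_divergence_identity_general
    (n R CV κ μ lam : ℝ) (P U Θ : ℝ → ℝ) {r : ℝ} (hr : r ≠ 0)
    (hP : DifferentiableAt ℝ P r) (hU : ContDiffAt ℝ 2 U r) (hΘ : ContDiffAt ℝ 2 Θ r)
    (hmass : 1 / 2 * r * deriv P r + deriv P r * U r
      + P r * (deriv U r + (n - 1) / r * U r) = 0)
    (henergy : P r * (U r ^ 2 / 2 + CV * Θ r)
        + 1 / 2 * r * deriv (fun s => P s * (U s ^ 2 / 2 + CV * Θ s)) r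
        + deriv (fun s => U s * P s * (U s ^ 2 / 2 + CV * Θ s) + R * U s * P s * Θ s) r
        + (n - 1) / r * (U r * P r * (U r ^ 2 / 2 + CV * Θ r) + R * U r * P r * Θ r)
        - κ * (deriv (deriv Θ) r + (n - 1) / r * deriv Θ r)
      = 2 * μ * (deriv U r ^ 2 + (n - 1) / r ^ 2 * U r ^ 2)
        + lam * (deriv U r + (n - 1) / r * U r) ^ 2
        + (2 * μ + lam)
          * (deriv (deriv U) r + (n - 1) / r * deriv U r - (n - 1) / r ^ 2 * U r) * U r) :
    P r * (CV * Θ r + U r ^ 2 / 2)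
        + P r * (r / 2 + U r) * deriv (fun s => CV * Θ s + U s ^ 2 / 2) r
        + deriv (fun s => R * P s * Θ s * U s) r
        + (n - 1) / r * (R * P r * Θ r * U r)
        - κ * (deriv (deriv Θ) r + (n - 1) / r * deriv Θ r)
        - (2 * μ + lam)
          * (deriv (deriv fun s => U s ^ 2 / 2) r
            + (n - 1) / r * deriv (fun s => U s ^ 2 / 2) r)
      = lam * (deriv (fun s => (n - 1) * U s ^ 2 / s) r + (n - 1) ^ 2 / r ^ 2 * U r ^ 2) := by
  have hU₀ : DifferentiableAt ℝ U r := hU.differentiableAt two_ne_zero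
  have hΘ₀ : DifferentiableAt ℝ Θ r := hΘ.differentiableAt two_ne_zero
  have hU_near : ∀ᶠ s in 𝓝 r, DifferentiableAt ℝ U s :=
    (hU.eventually (by simp)).mono fun s hs => hs.differentiableAt two_ne_zero
  have hU' : DifferentiableAt ℝ (deriv U) r :=
    (hU.derivWithin (m := 1) one_add_one_eq_two.le).differentiableAt one_ne_zero
  have htransport := conservative_transport_eq_convective
    (E := fun s => U s ^ 2 / 2 + CV * Θ s) hP hU₀ (by fun_prop) hmass
  have hflux := radialDiv_add (n := n) (r := r)
    (U := fun s => U s * P s * (U s ^ 2 / 2 + CV * Θ s))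
    (V := fun s => R * U s * P s * Θ s) (by fun_prop) (by fun_prop)
  have hviscous := viscous_power_eq_radialDiv (n := n) μ lam hr hU_near hU'
  have hpressure : (fun s => R * P s * Θ s * U s) = fun s => R * U s * P s * Θ s := by
    funext s
    ring
  simp only [radialDiv] at htransport hflux hviscous
  simp only [hpressure, add_comm (CV * Θ _)]
  linear_combination henergy - htransport - hflux + hviscous

/-- (Total energy divergence identity) -/
theorem total_energy_divergence_identity
    (d : ℕ) (hd : 1 ≤ d) (R CV κ μ lam : ℝ)
    (hR : 0 < R) (hCV : 0 < CV) (hκ : 0 < κ) (hμ : 0 < μ)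
    (hlam : 0 ≤ 2 * μ + d * lam)
    (P U Θ : ℝ → ℝ)
    (hP : ContDiffOn ℝ 1 P (Ioi 0))
    (hU : ContDiffOn ℝ 2 U (Ioi 0))
    (hΘ : ContDiffOn ℝ 2 Θ (Ioi 0))
    (hODE : BackwardODE d R CV κ μ lam P U Θ) :
    ∀ r : ℝ, 0 < r →
      P r * (CV * Θ r + U r ^ 2 / 2)
        + P r * (r / 2 + U r) * deriv (fun s => CV * Θ s + U s ^ 2 / 2) r
        + deriv (fun s => R * P s * Θ s * U s) r
        + ((d : ℝ) - 1) / r * (R * P r * Θ r * U r)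
        - κ * (deriv (deriv Θ) r + ((d : ℝ) - 1) / r * deriv Θ r)
        - (2 * μ + lam) *
            (deriv (deriv (fun s => U s ^ 2 / 2)) r
              + ((d : ℝ) - 1) / r * deriv (fun s => U s ^ 2 / 2) r)
      = lam * (deriv (fun s => ((d : ℝ) - 1) * U s ^ 2 / s) r
          + ((d : ℝ) - 1) ^ 2 / r ^ 2 * U r ^ 2) := by
  intro r hr
  have hnhds : Ioi (0 : ℝ) ∈ 𝓝 r := Ioi_mem_nhds hr
  exact total_energy_divergence_identity_general d R CV κ μ lam P U Θ hr.ne'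
    ((hP.contDiffAt hnhds).differentiableAt one_ne_zero) (hU.contDiffAt hnhds)
    (hΘ.contDiffAt hnhds) (hODE r hr).1 (hODE r hr).2.2
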